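/- arXiv:2209.08643 — 4 statements merged into one kernel-verified Lean document; each statement's English description precedes it below -/
import Mathlib

section
/- Let C be a groupoid, Φ : C ⥤ C an automorphism covering the bijection φ of objects, and (ι, σ) a bisection of C. Then α_Φ(σ) := Φ ∘ σ ∘ φ⁻¹ (the assignment x ↦ Φ(σ(φ⁻¹(x)))) is a bisection of C whose underlying object bijection is φ ∘ ι ∘ φ⁻¹, and the associated inner automorphisms satisfy I_{α_Φ(σ)} = Φ ∘ I_σ ∘ Φ⁻¹. -/
open CategoryTheory

/-- A bisection of a groupoid `C`: a bijection `ι` of the objects together with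
a morphism `σ x : x ⟶ ι x` for every object `x`. -/
structure GroupoidBisection (C : Type*) [Groupoid C] where
  ι : C ≃ C
  σ : ∀ x : C, x ⟶ ι x

/-- The inner automorphism associated to a bisection: it sends an object `x` to `ι x`
and a morphism `p : x ⟶ y` to `σ(x)⁻¹ ≫ p ≫ σ(y) : ι x ⟶ ι y`. -/
def GroupoidBisection.innerAut {C : Type*} [Groupoid C] (b : GroupoidBisection C) :
    C ⥤ C where
  obj x := b.ι x
  map {x y} p := Groupoid.inv (b.σ x) ≫ p ≫ b.σ y
  map_id x := by simp
  map_comp {x y z} p q := by simp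

/-- The bisection `α_Φ(σ) = Φ ∘ σ ∘ φ⁻¹` obtained by conjugating a bisection by an
automorphism `Φ` covering the bijection `φ` of objects; its underlying object bijection
is `φ ∘ ι ∘ φ⁻¹`. -/
def conjBisection {C : Type*} [Groupoid C] (Φ : C ⥤ C) (φ : C ≃ C)
    (hobj : ∀ x, Φ.obj x = φ x) (b : GroupoidBisection C) : GroupoidBisection C where
  ι := (φ.symm.trans b.ι).trans φ
  σ x := eqToHom (by rw [hobj]; simp) ≫ Φ.map (b.σ (φ.symm x)) ≫ eqToHom (hobj _)

/-- Let `Φ : C ⥤ C` be an automorphism of a groupoid `C` covering the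
bijection `φ` of objects, and `(ι, σ)` a bisection of `C`.  Then `α_Φ(σ) := Φ ∘ σ ∘ φ⁻¹`
is a bisection whose underlying bijection is `φ ∘ ι ∘ φ⁻¹`, and the associated inner
automorphisms satisfy `I_{α_Φ(σ)} = Φ ∘ I_σ ∘ Φ⁻¹`. -/
theorem innerAut_conjBisection {C : Type*} [Groupoid C]
    (Φ Φinv : C ⥤ C) (φ : C ≃ C) (hobj : ∀ x, Φ.obj x = φ x)
    (h₁ : Φ ⋙ Φinv = 𝟭 C) (h₂ : Φinv ⋙ Φ = 𝟭 C)
    (b : GroupoidBisection C) :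
    (∀ x : C, (conjBisection Φ φ hobj b).ι x = φ (b.ι (φ.symm x))) ∧
    (conjBisection Φ φ hobj b).innerAut = Φinv ⋙ b.innerAut ⋙ Φ := by
  refine ⟨fun x => rfl, ?_⟩
  have hs : ∀ x, φ.symm (Φ.obj x) = x := fun x => by rw [hobj]; simp
  have hσ : ∀ x y (h : x = y), b.σ x = eqToHom h ≫ b.σ y ≫ eqToHom (by rw [h]) := by
    intro x y h
    subst h
    simp
  have key : Φ ⋙ (conjBisection Φ φ hobj b).innerAut = b.innerAut ⋙ Φ := by
    refine CategoryTheory.Functor.ext (fun x => ?_) (fun x y p => ?_)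
    · change φ (b.ι (φ.symm (Φ.obj x))) = Φ.obj (b.ι x)
      rw [hs, hobj]
    · simp only [Functor.comp_map, GroupoidBisection.innerAut, conjBisection]
      rw [hσ _ _ (hs x), hσ _ _ (hs y)]
      simp [Groupoid.inv_eq_inv, eqToHom_map]
  calc (conjBisection Φ φ hobj b).innerAut
      = (Φinv ⋙ Φ) ⋙ (conjBisection Φ φ hobj b).innerAut := by rw [h₂, Functor.id_comp]
    _ = Φinv ⋙ (Φ ⋙ (conjBisection Φ φ hobj b).innerAut) := rfl
    _ = Φinv ⋙ b.innerAut ⋙ Φ := by rw [key]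
end

section
/- Let θ be a left 2-action of a 2-group G₁ ⇉ G₀ on a groupoid (in sets) X₁ ⇉ X₀, with H = ker(s_G), ρ = t_G|_H, σ_h(x) = h·u(x) and Σ_g(p) = u_G(g)·p. Then for all h ∈ H, g ∈ G₀, p ∈ X₁ and x ∈ X₀: (1) the inner automorphism of σ_h equals Σ_{ρ(h)}, that is, σ_h(t(p)) * p * i(σ_h(s(p))) = u_G(ρ(h))·p; (2) α_g(h) := u_G(g)·h·u_G(g)⁻¹ lies in H, and Σ_g(σ_h(g⁻¹·x)) = σ_{α_g(h)}(x). -/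
/-- A groupoid in sets: arrows `X₁`, objects `X₀`, source/target/unit/inversion maps and a
(total) composition `comp p q`, subject to the groupoid axioms whenever the composability
condition `s p = t q` holds. -/
structure SetGroupoid (X₁ X₀ : Type*) where
  s : X₁ → X₀
  t : X₁ → X₀
  u : X₀ → X₁
  i : X₁ → X₁
  comp : X₁ → X₁ → X₁
  s_u : ∀ x, s (u x) = x
  t_u : ∀ x, t (u x) = x
  s_comp : ∀ p q, s p = t q → s (comp p q) = s q
  t_comp : ∀ p q, s p = t q → t (comp p q) = t p
  comp_assoc : ∀ p q r, s p = t q → s q = t r → comp (comp p q) r = comp p (comp q r)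
  comp_u : ∀ p, comp p (u (s p)) = p
  u_comp : ∀ p, comp (u (t p)) p = p
  s_i : ∀ p, s (i p) = t p
  t_i : ∀ p, t (i p) = s p
  comp_i : ∀ p, comp p (i p) = u (t p)
  i_comp : ∀ p, comp (i p) p = u (s p)

/-- A 2-group: a groupoid in sets whose arrows and objects are groups, whose structural maps
are group homomorphisms, and which satisfies the interchange law. -/
structure TwoGroup (G₁ G₀ : Type*) [Group G₁] [Group G₀] extends SetGroupoid G₁ G₀ where
  s_mul : ∀ g g', s (g * g') = s g * s g'
  t_mul : ∀ g g', t (g * g') = t g * t g'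
  u_mul : ∀ g g', u (g * g') = u g * u g'
  i_mul : ∀ g g', i (g * g') = i g * i g'
  interchange : ∀ g₁ g₂ g₁' g₂', s g₁ = t g₂ → s g₁' = t g₂' →
    comp g₁ g₂ * comp g₁' g₂' = comp (g₁ * g₁') (g₂ * g₂')

/-- A left 2-action of a 2-group `G₁ ⇉ G₀` on a groupoid `X₁ ⇉ X₀`: left group actions on
arrows and on objects, compatible with all the structural maps and with composition. -/
structure TwoAction {G₁ G₀ X₁ X₀ : Type*} [Group G₁] [Group G₀]
    (G : TwoGroup G₁ G₀) (X : SetGroupoid X₁ X₀) where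
  act₁ : G₁ → X₁ → X₁
  act₀ : G₀ → X₀ → X₀
  one_act₁ : ∀ p, act₁ 1 p = p
  mul_act₁ : ∀ g g' p, act₁ (g * g') p = act₁ g (act₁ g' p)
  one_act₀ : ∀ x, act₀ 1 x = x
  mul_act₀ : ∀ g g' x, act₀ (g * g') x = act₀ g (act₀ g' x)
  s_act : ∀ g p, X.s (act₁ g p) = act₀ (G.s g) (X.s p)
  t_act : ∀ g p, X.t (act₁ g p) = act₀ (G.t g) (X.t p)
  u_act : ∀ g₀ x, X.u (act₀ g₀ x) = act₁ (G.u g₀) (X.u x)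
  i_act : ∀ g p, X.i (act₁ g p) = act₁ (G.i g) (X.i p)
  comp_act : ∀ g h p q, G.s g = G.t h → X.s p = X.t q →
    X.comp (act₁ g p) (act₁ h q) = act₁ (G.comp g h) (X.comp p q)

/-- Given a left 2-action of a 2-group `G₁ ⇉ G₀` on a groupoid `X₁ ⇉ X₀`,
with `H = ker s_G`, `ρ = t_G|_H`, `σ_h(x) = h·u(x)` and `Σ_g(p) = u_G(g)·p`:
(1) the inner automorphism of the bisection `σ_h` equals `Σ_{ρ(h)}`, i.e.
`σ_h(t(p)) * p * i(σ_h(s(p))) = u_G(ρ(h))·p`;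
(2) `α_g(h) := u_G(g)·h·u_G(g)⁻¹ ∈ H` and `Σ_g ∘ σ_h ∘ (g⁻¹·) = σ_{α_g(h)}`. -/
theorem innerAut_sigma_eq_Sigma_rho {G₁ G₀ X₁ X₀ : Type*} [Group G₁] [Group G₀]
    (G : TwoGroup G₁ G₀) (X : SetGroupoid X₁ X₀) (θ : TwoAction G X) :
    (∀ (h : G₁) (p : X₁), G.s h = 1 →
      X.comp (X.comp (θ.act₁ h (X.u (X.t p))) p) (X.i (θ.act₁ h (X.u (X.s p))))
        = θ.act₁ (G.u (G.t h)) p) ∧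
    (∀ (g : G₀) (h : G₁) (x : X₀), G.s h = 1 →
      G.s (G.u g * h * (G.u g)⁻¹) = 1 ∧
      θ.act₁ (G.u g) (θ.act₁ h (X.u (θ.act₀ g⁻¹ x)))
        = θ.act₁ (G.u g * h * (G.u g)⁻¹) (X.u x)) := by
  have hu1 : G.u 1 = 1 := by
    have := G.u_mul 1 1
    rw [mul_one] at this
    exact (mul_eq_left.mp this.symm)
  have hs1 : G.s 1 = 1 := by
    rw [← hu1, G.s_u]
  have ht1 : G.t 1 = 1 := by
    rw [← hu1, G.t_u]
  have hiu : ∀ x, X.i (X.u x) = X.u x := by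
    intro x
    have h1 := X.u_comp (X.i (X.u x))
    rw [X.t_i, X.s_u, X.comp_i, X.t_u] at h1
    exact h1.symm
  have huinv : ∀ g, G.u g⁻¹ = (G.u g)⁻¹ := by
    intro g
    apply eq_inv_of_mul_eq_one_left
    rw [← G.u_mul, inv_mul_cancel, hu1]
  refine ⟨?_, ?_⟩
  · intro h p hh
    have e1 : X.comp (θ.act₁ h (X.u (X.t p))) p = θ.act₁ h p := by
      have h1 := θ.comp_act h 1 (X.u (X.t p)) p (by rw [hh, ht1]) (X.s_u _)
      have h2 := G.comp_u h
      rw [hh, hu1] at h2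
      rwa [θ.one_act₁, X.u_comp, h2] at h1
    rw [e1, θ.i_act, hiu, θ.comp_act _ _ _ _ (G.t_i h).symm (X.t_u _).symm, G.comp_i, X.comp_u]
  · intro g h x hh
    refine ⟨?_, ?_⟩
    · rw [← huinv, G.s_mul, G.s_mul, G.s_u, G.s_u, hh, mul_one, mul_inv_cancel]
    · rw [θ.u_act, huinv, θ.mul_act₁, θ.mul_act₁]
end

section
/- Let (𝔤, 𝔥, ∂, L) be a crossed module of real Lie algebras and suppose the semidirect product 𝔥 ⋊ 𝔤 carries a real inner product B such that the adjoint representation acts by skew-adjoint operators, i.e. B([a,b],c) + B(b,[a,c]) = 0 for all a, b, c ∈ 𝔥 ⋊ 𝔤, and such that the orthogonal complement of the ideal 𝔥 × {0} is exactly {0} × 𝔤 (the 'trivial orthogonal' condition). Then L = 0 (that is, L_x y = 0 for all x ∈ 𝔤 and y ∈ 𝔥), the Lie algebra 𝔥 is abelian, and ∂(𝔥) is contained in the center of 𝔤. -/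
/-- A crossed module of real Lie algebras `(𝔤, 𝔥, ∂, L)`: a Lie algebra homomorphism
`∂ = d : 𝔥 → 𝔤` and a Lie algebra homomorphism `L` from `𝔤` to the derivations of `𝔥`,
satisfying the Peiffer identities `∂(L x y) = ⁅x, ∂y⁆` and `L (∂y) y' = ⁅y, y'⁆`. -/
structure CrossedModuleLieAlg (𝔤 𝔥 : Type*) [LieRing 𝔤] [LieAlgebra ℝ 𝔤]
    [LieRing 𝔥] [LieAlgebra ℝ 𝔥] where
  d : 𝔥 →ₗ[ℝ] 𝔤
  L : 𝔤 →ₗ[ℝ] 𝔥 →ₗ[ℝ] 𝔥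
  d_bracket : ∀ y y' : 𝔥, d ⁅y, y'⁆ = ⁅d y, d y'⁆
  L_der : ∀ (x : 𝔤) (y y' : 𝔥), L x ⁅y, y'⁆ = ⁅L x y, y'⁆ + ⁅y, L x y'⁆
  L_bracket : ∀ (x x' : 𝔤) (y : 𝔥), L ⁅x, x'⁆ y = L x (L x' y) - L x' (L x y)
  peiffer₁ : ∀ (x : 𝔤) (y : 𝔥), d (L x y) = ⁅x, d y⁆
  peiffer₂ : ∀ y y' : 𝔥, L (d y) y' = ⁅y, y'⁆

/-- The bracket of the semidirect product `𝔥 ⋊ 𝔤`: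
`[(y,x),(y',x')] = ([y,y'] + L_x y' − L_{x'} y, [x,x'])`. -/
def sdBracket {𝔤 𝔥 : Type*} [LieRing 𝔤] [LieAlgebra ℝ 𝔤] [LieRing 𝔥] [LieAlgebra ℝ 𝔥]
    (cm : CrossedModuleLieAlg 𝔤 𝔥) : 𝔥 × 𝔤 → 𝔥 × 𝔤 → 𝔥 × 𝔤 :=
  fun a b => (⁅a.1, b.1⁆ + cm.L a.2 b.1 - cm.L b.2 a.1, ⁅a.2, b.2⁆)

/-- Let `(𝔤, 𝔥, ∂, L)` be a crossed module of real Lie algebras whose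
semidirect product `𝔥 ⋊ 𝔤` carries an inner product `B` for which the adjoint
representation acts by skew-adjoint operators, and such that the orthogonal complement of
the ideal `𝔥 × {0}` is exactly `{0} × 𝔤`.  Then `L = 0`, `𝔥` is abelian, and `∂(𝔥)` is
contained in the center of `𝔤`. -/
theorem trivial_orthogonal_crossedModule
    {𝔤 𝔥 : Type*} [LieRing 𝔤] [LieAlgebra ℝ 𝔤] [LieRing 𝔥] [LieAlgebra ℝ 𝔥]
    (cm : CrossedModuleLieAlg 𝔤 𝔥)
    (B : (𝔥 × 𝔤) →ₗ[ℝ] (𝔥 × 𝔤) →ₗ[ℝ] ℝ)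
    (hsymm : ∀ a b : 𝔥 × 𝔤, B a b = B b a)
    (hpos : ∀ a : 𝔥 × 𝔤, a ≠ 0 → 0 < B a a)
    (hskew : ∀ a b c : 𝔥 × 𝔤, B (sdBracket cm a b) c + B b (sdBracket cm a c) = 0)
    (horth : ∀ z : 𝔥 × 𝔤, (∀ y : 𝔥, B z (y, 0) = 0) ↔ z.1 = 0) :
    (∀ (x : 𝔤) (y : 𝔥), cm.L x y = 0) ∧
    (∀ y y' : 𝔥, ⁅y, y'⁆ = 0) ∧
    (∀ (y : 𝔥) (x : 𝔤), ⁅cm.d y, x⁆ = 0) := by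
  have hL : ∀ (x : 𝔤) (y : 𝔥), cm.L x y = 0 := by
    intro x y
    by_contra hne
    have h1 := hskew (y, 0) (0, x) (cm.L x y, 0)
    have h2 := (horth (0, x)).2 rfl ⁅y, cm.L x y⁆
    have h3 := hpos (cm.L x y, 0) (by simpa using hne)
    have e1 : sdBracket cm (y, 0) (0, x) = -(cm.L x y, 0) := by
      simp [sdBracket]
    have e2 : sdBracket cm (y, 0) (cm.L x y, 0) = (⁅y, cm.L x y⁆, 0) := by
      simp [sdBracket]
    rw [e1, e2, h2, map_neg, LinearMap.neg_apply] at h1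
    linarith
  refine ⟨hL, fun y y' => ?_, fun y x => ?_⟩
  · rw [← cm.peiffer₂, hL]
  · rw [← lie_skew, ← cm.peiffer₁, hL, map_zero, neg_zero]
end

section
/- Let (𝔤, 𝔥, ∂, L) be a crossed module of real Lie algebras equipped with inner products B_𝔥 on 𝔥 and B_𝔤 on 𝔤 such that the adjoint representation of 𝔤 acts by skew-adjoint operators on (𝔤, B_𝔤), i.e. B_𝔤([x,x'],x'') + B_𝔤(x',[x,x'']) = 0, and each L_x acts skew-adjointly on (𝔥, B_𝔥), i.e. B_𝔥(L_x y, y') + B_𝔥(y, L_x y') = 0. Let B be the direct-sum inner product B((y,x),(y',x')) = B_𝔥(y,y') + B_𝔤(x,x') on 𝔥 ⋊ 𝔤. Then the adjoint representation of 𝔥 ⋊ 𝔤 acts by skew-adjoint operators with respect to B if and only if L = 0. -/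
/-- Let `(𝔤, 𝔥, ∂, L)` be a crossed module of real Lie algebras with
inner products `B_𝔥`, `B_𝔤` such that `ad(𝔤)` is skew-adjoint on `(𝔤, B_𝔤)` and each
`L_x` is skew-adjoint on `(𝔥, B_𝔥)`.  Then the adjoint representation of `𝔥 ⋊ 𝔤` is
skew-adjoint with respect to the direct-sum inner product `B = B_𝔥 ⊕ B_𝔤` if and only if
`L = 0`. -/
theorem sd_adjoint_skew_iff_L_eq_zero
    {𝔤 𝔥 : Type*} [LieRing 𝔤] [LieAlgebra ℝ 𝔤] [LieRing 𝔥] [LieAlgebra ℝ 𝔥]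
    (cm : CrossedModuleLieAlg 𝔤 𝔥)
    (Bh : 𝔥 →ₗ[ℝ] 𝔥 →ₗ[ℝ] ℝ) (Bg : 𝔤 →ₗ[ℝ] 𝔤 →ₗ[ℝ] ℝ)
    (hsymm_h : ∀ y y' : 𝔥, Bh y y' = Bh y' y)
    (hpos_h : ∀ y : 𝔥, y ≠ 0 → 0 < Bh y y)
    (hsymm_g : ∀ x x' : 𝔤, Bg x x' = Bg x' x)
    (hpos_g : ∀ x : 𝔤, x ≠ 0 → 0 < Bg x x)
    (hskew_g : ∀ x x' x'' : 𝔤, Bg ⁅x, x'⁆ x'' + Bg x' ⁅x, x''⁆ = 0)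
    (hskew_L : ∀ (x : 𝔤) (y y' : 𝔥), Bh (cm.L x y) y' + Bh y (cm.L x y') = 0) :
    (∀ a b c : 𝔥 × 𝔤,
      (Bh (sdBracket cm a b).1 c.1 + Bg (sdBracket cm a b).2 c.2)
        + (Bh b.1 (sdBracket cm a c).1 + Bg b.2 (sdBracket cm a c).2) = 0)
      ↔ (∀ (x : 𝔤) (y : 𝔥), cm.L x y = 0) := by
  constructor
  · intro h x y
    by_contra hne
    have h1 := h (y, 0) (0, x) (cm.L x y, 0)
    have h2 := hpos_h _ hne
    simp [sdBracket] at h1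
    linarith
  · intro h a b c
    have hb : ∀ y y' : 𝔥, ⁅y, y'⁆ = 0 := fun y y' => by rw [← cm.peiffer₂, h]
    have := hskew_g a.2 b.2 c.2
    simpa [sdBracket, h, hb] using this
end
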